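/- Let A be a commutative ring with 2 ∈ A^×, let (R,*) be an involutive A-algebra, and let (D,P) be a weak symplectic determinant law of dimension 2d on (R,*). Then ker(D) is stable under the involution *, and ker(D) ∩ R^+ ⊆ ker(P). Consequently, for every two-sided ideal I ⊆ ker(D) with I^* = I, the pair (D,P) factors uniquely through a weak symplectic determinant law (D̄,P̄) of dimension 2d on (R/I, *), i.e. D = D̄ ∘ (R → R/I) and P = P̄ ∘ (R^+ → (R/I)^+); and if (D,P) is a symplectic determinant law, so is (D̄,P̄). -/

import Mathlib

/-!
STATEMENT 4: for a weak symplectic determinant law `(D, P)` of dimension `2d`, the kernel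
`ker D` is `*`-stable and `ker(D) ∩ R⁺ ⊆ ker(P)`; consequently, for every `*`-stable
two-sided ideal `I ⊆ ker D`, the pair `(D, P)` factors uniquely through a weak symplectic
determinant law on `R/I` (realized by any surjection `π : R → R'` with kernel `I`
commuting with the involutions), and symplectic determinant laws factor to symplectic
determinant laws.
-/

open scoped TensorProduct

universe u

namespace SympDet

/-! ### Polynomial laws valued in the base ring -/

variable (A : Type u) [CommRing A]

/-- An `A`-polynomial law on the `A`-module `M` with values in `A`: a family of maps
`M ⊗[A] B → B` (written `B ⊗[A] M → B`), one for each commutative `A`-algebra `B`,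
natural in `B`. -/
structure PolyLaw (M : Type u) [AddCommGroup M] [Module A M] : Type (u + 1) where
  toFun : ∀ (B : Type u) [CommRing B] [Algebra A B], B ⊗[A] M → B
  natural : ∀ (B B' : Type u) [CommRing B] [Algebra A B] [CommRing B'] [Algebra A B']
      (f : B →ₐ[A] B') (x : B ⊗[A] M),
      f (toFun B x) = toFun B' (LinearMap.rTensor M f.toLinearMap x)

variable {A}

/-- Homogeneity of degree `n` of a polynomial law. -/
def PolyLaw.IsHomog {M : Type u} [AddCommGroup M] [Module A M] (P : PolyLaw A M) (n : ℕ) : Prop :=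
  ∀ (B : Type u) [CommRing B] [Algebra A B] (b : B) (x : B ⊗[A] M),
    P.toFun B (b • x) = b ^ n * P.toFun B x

/-- The kernel of a polynomial law. -/
def PolyLaw.lawKer {M : Type u} [AddCommGroup M] [Module A M] (P : PolyLaw A M) : Set M :=
  {m | ∀ (B : Type u) [CommRing B] [Algebra A B] (b : B) (y : B ⊗[A] M),
    P.toFun B (b ⊗ₜ[A] m + y) = P.toFun B y}

/-- Multiplicativity of a polynomial law on an `A`-algebra `R`. -/
def PolyLaw.IsMult {R : Type u} [Ring R] [Algebra A R] (D : PolyLaw A R) : Prop :=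
  ∀ (B : Type u) [CommRing B] [Algebra A B],
    D.toFun B 1 = 1 ∧ ∀ x y : B ⊗[A] R, D.toFun B (x * y) = D.toFun B x * D.toFun B y

/-! ### Involutive algebras -/

variable (A) in
/-- An involutive `A`-algebra structure: an `A`-linear involutive anti-automorphism. -/
structure InvAlg (R : Type u) [Ring R] [Algebra A R] : Type u where
  star : R →ₗ[A] R
  star_one : star 1 = 1
  star_mul : ∀ x y : R, star (x * y) = star y * star x
  star_star : ∀ x : R, star (star x) = x

variable {R : Type u} [Ring R] [Algebra A R]

/-- The submodule of symmetric elements `R⁺`. -/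
def InvAlg.plus (s : InvAlg A R) : Submodule A R :=
  LinearMap.ker (s.star - LinearMap.id)

theorem InvAlg.one_mem_plus (s : InvAlg A R) : (1 : R) ∈ s.plus := by
  simp [InvAlg.plus, LinearMap.mem_ker, LinearMap.sub_apply, s.star_one]

/-- `1` as an element of `R⁺`. -/
def InvAlg.onePlus (s : InvAlg A R) : s.plus := ⟨1, s.one_mem_plus⟩

/-- The inclusion `B ⊗[A] R⁺ → B ⊗[A] R`. -/
noncomputable def InvAlg.incl (s : InvAlg A R) (B : Type u) [CommRing B] [Algebra A B] :
    B ⊗[A] ↥s.plus →ₗ[A] B ⊗[A] R :=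
  LinearMap.lTensor B s.plus.subtype

/-- A weak symplectic determinant law of dimension `2d`. -/
structure IsWeakSympDet (s : InvAlg A R) (d : ℕ) (D : PolyLaw A R) (P : PolyLaw A ↥s.plus) :
    Prop where
  mult : D.IsMult
  homog : D.IsHomog (2 * d)
  starInv : ∀ (B : Type u) [CommRing B] [Algebra A B] (x : B ⊗[A] R),
      D.toFun B (LinearMap.lTensor B s.star x) = D.toFun B x
  homogP : P.IsHomog d
  sq : ∀ (B : Type u) [CommRing B] [Algebra A B] (x : B ⊗[A] ↥s.plus),
      P.toFun B x ^ 2 = D.toFun B (s.incl B x)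
  one : P.toFun A ((1 : A) ⊗ₜ[A] s.onePlus) = 1

/-! ### Characteristic polynomials and the Cayley-Hamilton ideal -/

/-- The characteristic polynomial `χ^P(x, t) = P_{B[t]}(t·e - x)` of a polynomial law,
relative to a marked element `e` (the unit). -/
noncomputable def chPoly {M : Type u} [AddCommGroup M] [Module A M] (P : PolyLaw A M) (e : M)
    (B : Type u) [CommRing B] [Algebra A B] (x : B ⊗[A] M) : Polynomial B :=
  P.toFun (Polynomial B)
    ((Polynomial.X : Polynomial B) ⊗ₜ[A] e -
      LinearMap.rTensor M (IsScalarTower.toAlgHom A B (Polynomial B)).toLinearMap x)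

/-- The coefficient `(-1)^i Λ_i` of `t^(n-i)` in the characteristic polynomial, with the
convention that it vanishes for `i > n`. -/
noncomputable def chCoeff {M : Type u} [AddCommGroup M] [Module A M] (P : PolyLaw A M) (e : M)
    (n i : ℕ) (B : Type u) [CommRing B] [Algebra A B] (x : B ⊗[A] M) : B :=
  if i ≤ n then (-1 : B) ^ i * (chPoly P e B x).coeff (n - i) else 0

/-- `χ^P(x, x)`: the characteristic polynomial of `x ∈ (B ⊗ R)⁺` evaluated at `x` itself. -/
noncomputable def chEval (s : InvAlg A R) (P : PolyLaw A ↥s.plus) (B : Type u) [CommRing B]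
    [Algebra A B] (x : B ⊗[A] ↥s.plus) : B ⊗[A] R :=
  Polynomial.aeval (s.incl B x) (chPoly P s.onePlus B x)

/-- The `A`-linear coefficient extraction map on multivariate polynomials. -/
noncomputable def mvLcoeff {n : ℕ} (α : Fin n →₀ ℕ) : MvPolynomial (Fin n) A →ₗ[A] A where
  toFun p := MvPolynomial.coeff α p
  map_add' p q := MvPolynomial.coeff_add α p q
  map_smul' c p := MvPolynomial.coeff_smul α c p

/-- Extracting the coefficient of the monomial `t^α` from an element of `R[t_1,…,t_n]`. -/
noncomputable def tensorCoeff {n : ℕ} (α : Fin n →₀ ℕ) :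
    (MvPolynomial (Fin n) A) ⊗[A] R →ₗ[A] R :=
  (TensorProduct.lid A R).toLinearMap ∘ₗ LinearMap.rTensor R (mvLcoeff α)

/-- The generators `χ^P_α(r_1, …, r_n)` of the Cayley–Hamilton ideal of `P`:
the multihomogeneous coefficients of `χ^P(t_1 r_1 + ⋯ + t_n r_n, t_1 r_1 + ⋯ + t_n r_n)`. -/
def chGen (s : InvAlg A R) (P : PolyLaw A ↥s.plus) : Set R :=
  {y | ∃ (n : ℕ) (r : Fin n → ↥s.plus) (α : Fin n →₀ ℕ),
    y = tensorCoeff α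
      (chEval s P (MvPolynomial (Fin n) A)
        (∑ i : Fin n, (MvPolynomial.X i : MvPolynomial (Fin n) A) ⊗ₜ[A] r i))}

/-- The Cayley–Hamilton ideal `CH(P)`: the two-sided ideal generated by the
multihomogeneous coefficients of the characteristic polynomials. -/
def chIdeal (s : InvAlg A R) (P : PolyLaw A ↥s.plus) : TwoSidedIdeal R :=
  TwoSidedIdeal.span (chGen s P)

/-- A symplectic determinant law of dimension `2d`: a weak symplectic determinant law
such that `CH(P) ⊆ ker(D)`. -/
def IsSympDet (s : InvAlg A R) (d : ℕ) (D : PolyLaw A R) (P : PolyLaw A ↥s.plus) : Prop :=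
  IsWeakSympDet s d D P ∧ ∀ y ∈ chIdeal s P, y ∈ D.lawKer

/-- A symplectic Cayley–Hamilton algebra of degree `2d`: a symplectic determinant law
such that `χ^P(r, r) = 0` for all symmetric `r` over all base extensions. -/
def IsSympCH (s : InvAlg A R) (d : ℕ) (D : PolyLaw A R) (P : PolyLaw A ↥s.plus) : Prop :=
  IsSympDet s d D P ∧
    ∀ (B : Type u) [CommRing B] [Algebra A B] (x : B ⊗[A] ↥s.plus), chEval s P B x = 0

end SympDet

/-!
Restrict a law `P` to a line: `P(x + X y)` is a polynomial in `X` whose value at `0` is `P(x)` and,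
when `P` is homogeneous of degree `d`, whose coefficient of `X ^ d` is `P(y)`. If `P ^ k = D` with
`k` invertible and `P(1) = 1`, then `P(1 + X y)` is the only `k`-th root of `D(1 + X y)` with
constant term `1`, so `D` determines `P(1 + X y)` and hence `P(y)`. This gives
`ker(D) ∩ R⁺ ⊆ ker(P)`. As `2` is invertible, `R⁺ → (R/I)⁺` is surjective, so by right
exactness of the tensor product both laws descend, and the axioms can be checked on lifts.
-/

namespace SympDet

section BaseChange

variable {A M N B C : Type*} [CommRing A] [AddCommGroup M] [Module A M] [AddCommGroup N]
  [Module A N] [CommRing B] [Algebra A B] [CommRing C] [Algebra A C]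

theorem lTensor_smul_left (φ : M →ₗ[A] N) (b : B) (x : B ⊗[A] M) :
    φ.lTensor B (b • x) = b • φ.lTensor B x :=
  map_smul (φ.baseChange B) b x

theorem rTensor_algHom_smul (f : B →ₐ[A] C) (b : B) (x : B ⊗[A] M) :
    LinearMap.rTensor M f.toLinearMap (b • x) = f b • LinearMap.rTensor M f.toLinearMap x := by
  induction x with
  | zero => simp only [smul_zero, map_zero]
  | tmul c m => simp [TensorProduct.smul_tmul']
  | add y z hy hz => simp only [smul_add, map_add, hy, hz]

theorem lTensor_rTensor_comm {V W : Type*} [AddCommGroup V] [Module A V] [AddCommGroup W]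
    [Module A W] (f : V →ₗ[A] W) (φ : M →ₗ[A] N) (x : V ⊗[A] M) :
    φ.lTensor W (f.rTensor M x) = f.rTensor N (φ.lTensor V x) := by
  rw [← LinearMap.comp_apply, ← LinearMap.comp_apply, LinearMap.lTensor_comp_rTensor,
    LinearMap.rTensor_comp_lTensor]

theorem lTensor_algHom_eq_map {R R' : Type*} [Ring R] [Algebra A R] [Ring R'] [Algebra A R']
    (π : R →ₐ[A] R') (x : B ⊗[A] R) :
    π.toLinearMap.lTensor B x = Algebra.TensorProduct.map (AlgHom.id B B) π x :=
  rfl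

end BaseChange

theorem eq_of_pow_eq_pow_of_coeff_zero_eq {B : Type*} [CommRing B] {k : ℕ} {p q : Polynomial B}
    (hk : (k : B) ∈ nonZeroDivisors B) (hp : p.coeff 0 ∈ nonZeroDivisors B)
    (hpq : p.coeff 0 = q.coeff 0) (h : p ^ k = q ^ k) : p = q := by
  set S := ∑ i ∈ Finset.range k, p ^ i * q ^ (k - 1 - i)
  have coeff_zero_S : S.coeff 0 = k * p.coeff 0 ^ (k - 1) := by
    simp only [Polynomial.coeff_zero_eq_eval_zero] at hpq ⊢
    rw [Polynomial.eval_finsetSum, ← geom_sum₂_self]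
    simp only [Polynomial.eval_mul, Polynomial.eval_pow, hpq]
  have S_mem : S ∈ nonZeroDivisors (Polynomial B) :=
    Polynomial.mem_nonzeroDivisors_of_coeff_mem 0 (coeff_zero_S ▸ mul_mem hk (pow_mem hp _))
  have sub_mul_S : (p - q) * S = 0 := by
    rw [(Commute.all p q).mul_geom_sum₂, h, sub_self]
  exact sub_eq_zero.1 (S_mem.2 _ sub_mul_S)

theorem exists_mem_of_mem_twoSidedIdeal_map {S S' F : Type*} [Ring S] [Ring S'] [FunLike F S S']
    [RingHomClass F S S'] {f : F} (hf : Function.Surjective f) {I : TwoSidedIdeal S} {y : S'}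
    (hy : y ∈ I.map f) : ∃ x ∈ I, f x = y := by
  induction hy using TwoSidedIdeal.span_induction with
  | mem _ hy => exact hy
  | zero => exact ⟨0, zero_mem I, map_zero f⟩
  | add _ _ _ _ hx hy =>
    obtain ⟨x, hx, rfl⟩ := hx
    obtain ⟨y, hy, rfl⟩ := hy
    exact ⟨x + y, add_mem hx hy, map_add f x y⟩
  | neg _ _ hx =>
    obtain ⟨x, hx, rfl⟩ := hx
    exact ⟨-x, neg_mem hx, map_neg f x⟩
  | left_absorb a _ _ hx =>
    obtain ⟨a, rfl⟩ := hf a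
    obtain ⟨x, hx, rfl⟩ := hx
    exact ⟨a * x, I.mul_mem_left a x hx, map_mul f a x⟩
  | right_absorb b _ _ hx =>
    obtain ⟨b, rfl⟩ := hf b
    obtain ⟨x, hx, rfl⟩ := hx
    exact ⟨x * b, I.mul_mem_right x b hx, map_mul f x b⟩

namespace PolyLaw

variable {A : Type u} [CommRing A] {M N : Type u} [AddCommGroup M] [Module A M]
  [AddCommGroup N] [Module A N]

@[ext]
protected theorem ext {P Q : PolyLaw A M}
    (h : ∀ (B : Type u) [CommRing B] [Algebra A B] (x : B ⊗[A] M), P.toFun B x = Q.toFun B x) :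
    P = Q := by
  obtain ⟨f, _⟩ := P
  obtain ⟨g, _⟩ := Q
  obtain rfl : f = g := by
    funext B _ _ x
    exact h B x
  rfl

/-- The pullback `P ∘ φ` of a polynomial law `P` on `N` along a linear map `φ : M → N`. -/
def comp (P : PolyLaw A N) (φ : M →ₗ[A] N) : PolyLaw A M where
  toFun B _ _ x := P.toFun B (φ.lTensor B x)
  natural B B' _ _ _ _ f x := by rw [P.natural, lTensor_rTensor_comm]

theorem comp_apply (P : PolyLaw A N) (φ : M →ₗ[A] N) (B : Type u) [CommRing B] [Algebra A B]
    (x : B ⊗[A] M) : (P.comp φ).toFun B x = P.toFun B (φ.lTensor B x) :=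
  rfl

theorem mem_lawKer_comp {P : PolyLaw A N} {φ : M →ₗ[A] N} {m : M} (hm : φ m ∈ P.lawKer) :
    m ∈ (P.comp φ).lawKer := by
  intro B _ _ b y
  simp only [comp_apply, map_add, LinearMap.lTensor_tmul]
  exact hm B b _

section Line

open Polynomial

variable {B : Type u} [CommRing B] [Algebra A B]

/-- The restriction of a polynomial law to the line through `x` in direction `y`, as a polynomial
in the parameter: `P(x + X y) ∈ B[X]`. -/
noncomputable def alongLine (P : PolyLaw A M) (x y : B ⊗[A] M) : B[X] :=
  P.toFun B[X] (LinearMap.rTensor M (CAlgHom (R := A)).toLinearMap x +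
    (X : B[X]) • LinearMap.rTensor M (CAlgHom (R := A)).toLinearMap y)

theorem map_alongLine {C : Type u} [CommRing C] [Algebra A C] (P : PolyLaw A M) (f : B[X] →ₐ[A] C)
    (x y : B ⊗[A] M) :
    f (P.alongLine x y) = P.toFun C (LinearMap.rTensor M (f.comp CAlgHom).toLinearMap x +
      f X • LinearMap.rTensor M (f.comp CAlgHom).toLinearMap y) := by
  rw [alongLine, P.natural, map_add, rTensor_algHom_smul, AlgHom.comp_toLinearMap,
    LinearMap.rTensor_comp_apply, LinearMap.rTensor_comp_apply]

theorem coeff_zero_alongLine (P : PolyLaw A M) (x y : B ⊗[A] M) :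
    (P.alongLine x y).coeff 0 = P.toFun B x := by
  have aeval_comp_C : ((aeval (0 : B)).restrictScalars A).comp CAlgHom = AlgHom.id A B := by
    ext b
    simp
  have h := P.map_alongLine ((aeval (0 : B)).restrictScalars A) x y
  rw [aeval_comp_C] at h
  simpa [coeff_zero_eq_eval_zero, coe_aeval_eq_eval] using h

theorem IsHomog.toLaurent_alongLine {P : PolyLaw A M} {d : ℕ} (hP : P.IsHomog d)
    (x y : B ⊗[A] M) :
    toLaurent (P.alongLine x y) =
      LaurentPolynomial.T d * LaurentPolynomial.invert (toLaurent (P.alongLine y x)) := by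
  let f : B[X] →ₐ[A] LaurentPolynomial B := (toLaurentAlg (R := B)).restrictScalars A
  let g : B[X] →ₐ[A] LaurentPolynomial B :=
    ((LaurentPolynomial.invert (R := B)).toAlgHom.comp toLaurentAlg).restrictScalars A
  have f_X : f X = LaurentPolynomial.T 1 := toLaurent_X
  have g_X : g X = LaurentPolynomial.T (-1) := by simp [g]
  have g_C : g.comp CAlgHom = f.comp (CAlgHom (R := A)) := by
    ext b
    simp [f, g]
  have T_pow : (LaurentPolynomial.T d : LaurentPolynomial B) = LaurentPolynomial.T 1 ^ d := by
    simp [LaurentPolynomial.T_pow]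
  -- Over `B[T;T⁻¹]`, `x + T y = T (y + T⁻¹ x)`, and homogeneity pulls out `T ^ d`.
  change f (P.alongLine x y) = LaurentPolynomial.T d * g (P.alongLine y x)
  rw [map_alongLine, map_alongLine, g_C, T_pow, ← hP, f_X, g_X, smul_add, smul_smul,
    ← LaurentPolynomial.T_add, add_neg_cancel, LaurentPolynomial.T_zero, one_smul, add_comm]

theorem IsHomog.coeff_alongLine {P : PolyLaw A M} {d : ℕ} (hP : P.IsHomog d) (x y : B ⊗[A] M) :
    (P.alongLine x y).coeff d = P.toFun B y := by
  have coeff_toLaurent (p : B[X]) (n : ℕ) : (toLaurent p).coeff (n : ℤ) = p.coeff n :=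
    Finsupp.mapDomain_apply Nat.castEmbedding.injective _ _
  have coeff_T_mul (f : LaurentPolynomial B) :
      (LaurentPolynomial.T d * f).coeff d = f.coeff 0 := by
    rw [LaurentPolynomial.T, AddMonoidAlgebra.coeff_single_mul_eq_mul_coeff 0, one_mul]
    simp
  rw [← coeff_zero_alongLine P y x, ← coeff_toLaurent, hP.toLaurent_alongLine, coeff_T_mul,
    LaurentPolynomial.invert_apply, neg_zero]
  exact coeff_toLaurent _ 0

theorem alongLine_tmul_add {P : PolyLaw A M} {m : M} (hm : m ∈ P.lawKer) (b : B)
    (x y : B ⊗[A] M) : P.alongLine x (b ⊗ₜ m + y) = P.alongLine x y := by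
  rw [alongLine, map_add, smul_add, add_left_comm, LinearMap.rTensor_tmul,
    TensorProduct.smul_tmul', hm, alongLine]

end Line

theorem toFun_one_tmul (P : PolyLaw A M) (m : M) (B : Type u) [CommRing B] [Algebra A B] :
    P.toFun B (1 ⊗ₜ m) = algebraMap A B (P.toFun A (1 ⊗ₜ m)) := by
  simpa using (P.natural A B (Algebra.ofId A B) (1 ⊗ₜ m)).symm

theorem IsHomog.lawKer_subset_of_pow_eq {P Q : PolyLaw A M} {d k : ℕ} (hP : P.IsHomog d)
    (hk : IsUnit (k : A)) {e : M} (he : IsUnit (P.toFun A (1 ⊗ₜ e)))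
    (hPQ : ∀ (B : Type u) [CommRing B] [Algebra A B] (x : B ⊗[A] M),
      P.toFun B x ^ k = Q.toFun B x) :
    Q.lawKer ⊆ P.lawKer := by
  intro m hm B _ _ b y
  have kB : IsUnit (k : B) := by simpa using hk.map (algebraMap A B)
  have eB : IsUnit (P.toFun B (1 ⊗ₜ e)) := P.toFun_one_tmul e B ▸ he.map _
  rw [← hP.coeff_alongLine (1 ⊗ₜ e), ← hP.coeff_alongLine (1 ⊗ₜ e) y]
  congr 1
  refine eq_of_pow_eq_pow_of_coeff_zero_eq kB.mem_nonZeroDivisors ?_ ?_ ?_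
  · rw [coeff_zero_alongLine]
    exact eB.mem_nonZeroDivisors
  · rw [coeff_zero_alongLine, coeff_zero_alongLine]
  · rw [alongLine, hPQ, alongLine, hPQ]
    exact alongLine_tmul_add hm b _ y

section Surjective

variable {φ : M →ₗ[A] N} (hφ : Function.Surjective φ)

include hφ

theorem comp_injective :
    Function.Injective fun P : PolyLaw A N ↦ P.comp φ := by
  intro P Q h
  ext B _ _ x
  obtain ⟨x, rfl⟩ := LinearMap.lTensor_surjective B hφ x
  exact congrArg (fun L : PolyLaw A M ↦ L.toFun B x) h

theorem IsHomog.of_comp {P : PolyLaw A N} {n : ℕ} (h : (P.comp φ).IsHomog n) : P.IsHomog n := by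
  intro B _ _ b x
  obtain ⟨x, rfl⟩ := LinearMap.lTensor_surjective B hφ x
  rw [← lTensor_smul_left]
  exact h B b x

theorem map_mem_lawKer {P : PolyLaw A N} {m : M} (hm : m ∈ (P.comp φ).lawKer) :
    φ m ∈ P.lawKer := by
  intro B _ _ b y
  obtain ⟨y, rfl⟩ := LinearMap.lTensor_surjective B hφ y
  rw [← LinearMap.lTensor_tmul, ← map_add]
  exact hm B b y

end Surjective

theorem toFun_lTensor_subtype_add {P : PolyLaw A M} {K : Submodule A M}
    (hK : (K : Set M) ⊆ P.lawKer) {B : Type u} [CommRing B] [Algebra A B] (z : B ⊗[A] K)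
    (x : B ⊗[A] M) : P.toFun B (K.subtype.lTensor B z + x) = P.toFun B x := by
  induction z generalizing x with
  | zero => rw [map_zero, zero_add]
  | tmul b m => exact hK m.2 B b x
  | add z w hz hw => rw [map_add, add_assoc, hz, hw]

theorem toFun_eq_of_lTensor_eq {P : PolyLaw A M} {φ : M →ₗ[A] N} (hφ : Function.Surjective φ)
    (hker : (LinearMap.ker φ : Set M) ⊆ P.lawKer) {B : Type u} [CommRing B] [Algebra A B]
    {x y : B ⊗[A] M} (hxy : φ.lTensor B x = φ.lTensor B y) : P.toFun B x = P.toFun B y := by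
  obtain ⟨z, hz⟩ := (lTensor_exact B φ.exact_subtype_ker_map hφ (x - y)).1 (by
    rw [map_sub, hxy, sub_self])
  rw [← sub_add_cancel x y, ← hz, toFun_lTensor_subtype_add hker]

theorem exists_comp_eq (P : PolyLaw A M) {φ : M →ₗ[A] N} (hφ : Function.Surjective φ)
    (hker : (LinearMap.ker φ : Set M) ⊆ P.lawKer) : ∃ Q : PolyLaw A N, Q.comp φ = P := by
  have lift_spec (B : Type u) [CommRing B] [Algebra A B] (x : B ⊗[A] N) :=
    Function.surjInv_eq (LinearMap.lTensor_surjective B hφ) x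
  refine ⟨⟨fun B _ _ x ↦ P.toFun B (Function.surjInv (LinearMap.lTensor_surjective B hφ) x),
    fun B B' _ _ _ _ f x ↦ ?_⟩, ?_⟩
  · rw [P.natural]
    apply toFun_eq_of_lTensor_eq hφ hker
    rw [lTensor_rTensor_comm, lift_spec, lift_spec]
  · ext B _ _ x
    exact toFun_eq_of_lTensor_eq hφ hker (lift_spec B _)

variable {R R' : Type u} [Ring R] [Algebra A R] [Ring R'] [Algebra A R']

theorem IsMult.of_comp {D : PolyLaw A R'} {π : R →ₐ[A] R'} (hπ : Function.Surjective π)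
    (h : (D.comp π.toLinearMap).IsMult) : D.IsMult := by
  intro B _ _
  obtain ⟨map_one', map_mul'⟩ := h B
  simp only [comp_apply, lTensor_algHom_eq_map, map_one, map_mul] at map_one' map_mul'
  have surj : Function.Surjective (Algebra.TensorProduct.map (AlgHom.id B B) π) :=
    LinearMap.lTensor_surjective B (g := π.toLinearMap) hπ
  exact ⟨map_one', surj.forall₂.2 map_mul'⟩

end PolyLaw

variable {A : Type u} [CommRing A] {R R' : Type u} [Ring R] [Algebra A R] [Ring R'] [Algebra A R']

namespace IsWeakSympDet

variable {s : InvAlg A R} {d : ℕ} {D : PolyLaw A R} {P : PolyLaw A s.plus}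

theorem star_mem_lawKer (h : IsWeakSympDet s d D P) {x : R} (hx : x ∈ D.lawKer) :
    s.star x ∈ D.lawKer := by
  have comp_star : D.comp s.star = D := PolyLaw.ext h.starInv
  apply PolyLaw.map_mem_lawKer (Function.Involutive.surjective s.star_star)
  rwa [comp_star]

theorem mem_lawKer_of_coe_mem (h : IsWeakSympDet s d D P) (h2 : IsUnit (2 : A)) {x : s.plus}
    (hx : (x : R) ∈ D.lawKer) : x ∈ P.lawKer :=
  h.homogP.lawKer_subset_of_pow_eq (Q := D.comp s.plus.subtype) (k := 2) (mod_cast h2)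
    (h.one ▸ isUnit_one) h.sq (PolyLaw.mem_lawKer_comp hx)

end IsWeakSympDet

variable {s : InvAlg A R} {s' : InvAlg A R'} {π : R →ₐ[A] R'}

namespace InvAlg

theorem mem_plus_iff {x : R} : x ∈ s.plus ↔ s.star x = x := by
  simp [plus, sub_eq_zero]

/-- The map `R⁺ → R'⁺` of symmetric elements induced by a homomorphism `π : R → R'` of involutive
algebras. -/
def mapPlus (hπ : ∀ x, π (s.star x) = s'.star (π x)) : s.plus →ₗ[A] s'.plus :=
  π.toLinearMap.restrict fun x hx ↦ by
    rw [mem_plus_iff] at hx ⊢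
    exact (hπ x).symm.trans (congrArg π hx)

variable (hπ : ∀ x, π (s.star x) = s'.star (π x))

theorem mapPlus_onePlus : mapPlus hπ s.onePlus = s'.onePlus :=
  Subtype.ext (map_one π)

theorem mapPlus_surjective (h2 : IsUnit (2 : A)) (hsurj : Function.Surjective π) :
    Function.Surjective (mapPlus hπ) := by
  rintro ⟨y, hy⟩
  obtain ⟨x, rfl⟩ := hsurj y
  obtain ⟨u, hu⟩ := h2.exists_left_inv
  refine ⟨⟨u • (x + s.star x), ?_⟩, Subtype.ext ?_⟩
  · rw [mem_plus_iff, map_smul, map_add, s.star_star, add_comm]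
  · change π (u • (x + s.star x)) = π x
    rw [map_smul, map_add, hπ, mem_plus_iff.1 hy, ← two_smul A, smul_smul, hu, one_smul]

theorem incl_lTensor_mapPlus {B : Type u} [CommRing B] [Algebra A B] (x : B ⊗[A] s.plus) :
    s'.incl B ((mapPlus hπ).lTensor B x) = π.toLinearMap.lTensor B (s.incl B x) := by
  rw [incl, incl, ← LinearMap.lTensor_comp_apply, ← LinearMap.lTensor_comp_apply]
  rfl

end InvAlg

section Descent

open InvAlg

variable {d : ℕ} {D : PolyLaw A R'} {P : PolyLaw A s'.plus}
  (hπ : ∀ x, π (s.star x) = s'.star (π x))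

theorem IsWeakSympDet.of_comp
    (h : IsWeakSympDet s d (D.comp π.toLinearMap) (P.comp (mapPlus hπ)))
    (hsurj : Function.Surjective π) (hplus : Function.Surjective (mapPlus hπ)) :
    IsWeakSympDet s' d D P where
  mult := h.mult.of_comp hsurj
  homog := PolyLaw.IsHomog.of_comp (φ := π.toLinearMap) hsurj h.homog
  starInv B _ _ x := by
    obtain ⟨x, rfl⟩ := LinearMap.lTensor_surjective B (g := π.toLinearMap) hsurj x
    have star_comp : s'.star ∘ₗ π.toLinearMap = π.toLinearMap ∘ₗ s.star :=
      LinearMap.ext fun x ↦ (hπ x).symm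
    rw [← LinearMap.lTensor_comp_apply, star_comp, LinearMap.lTensor_comp_apply]
    exact h.starInv B x
  homogP := h.homogP.of_comp hplus
  sq B _ _ x := by
    obtain ⟨x, rfl⟩ := LinearMap.lTensor_surjective B hplus x
    rw [incl_lTensor_mapPlus]
    exact h.sq B x
  one := by
    rw [← mapPlus_onePlus hπ]
    exact h.one

theorem chPoly_lTensor {M N : Type u} [AddCommGroup M] [Module A M] [AddCommGroup N] [Module A N]
    (P : PolyLaw A N) (φ : M →ₗ[A] N) (e : M) {B : Type u} [CommRing B] [Algebra A B]
    (x : B ⊗[A] M) : chPoly P (φ e) B (φ.lTensor B x) = chPoly (P.comp φ) e B x := by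
  rw [chPoly, chPoly, PolyLaw.comp_apply, map_sub, LinearMap.lTensor_tmul, lTensor_rTensor_comm]

theorem chEval_lTensor {B : Type u} [CommRing B] [Algebra A B] (x : B ⊗[A] s.plus) :
    chEval s' P B ((mapPlus hπ).lTensor B x) =
      π.toLinearMap.lTensor B (chEval s (P.comp (mapPlus hπ)) B x) := by
  rw [chEval, chEval, ← mapPlus_onePlus hπ, chPoly_lTensor, incl_lTensor_mapPlus,
    lTensor_algHom_eq_map, lTensor_algHom_eq_map, Polynomial.aeval_algHom_apply]

theorem tensorCoeff_lTensor {n : ℕ} (α : Fin n →₀ ℕ) (φ : R →ₗ[A] R')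
    (x : MvPolynomial (Fin n) A ⊗[A] R) :
    tensorCoeff α (φ.lTensor _ x) = φ (tensorCoeff α x) := by
  induction x with
  | zero => simp only [map_zero]
  | tmul p r => simp [tensorCoeff]
  | add x y hx hy => simp only [map_add, hx, hy]

theorem chGen_subset_image (hplus : Function.Surjective (mapPlus hπ)) :
    chGen s' P ⊆ π '' chGen s (P.comp (mapPlus hπ)) := by
  rintro _ ⟨n, r, α, rfl⟩
  choose r' hr' using fun i ↦ hplus (r i)
  have lift_sum : ∑ i, (MvPolynomial.X i : MvPolynomial (Fin n) A) ⊗ₜ[A] r i =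
      (mapPlus hπ).lTensor _ (∑ i, (MvPolynomial.X i : MvPolynomial (Fin n) A) ⊗ₜ[A] r' i) := by
    simp only [map_sum, LinearMap.lTensor_tmul, hr']
  refine ⟨_, ⟨n, r', α, rfl⟩, ?_⟩
  rw [lift_sum, chEval_lTensor, tensorCoeff_lTensor, AlgHom.toLinearMap_apply]

theorem chIdeal_le_map (hplus : Function.Surjective (mapPlus hπ)) :
    chIdeal s' P ≤ (chIdeal s (P.comp (mapPlus hπ))).map π :=
  TwoSidedIdeal.span_mono <|
    (chGen_subset_image hπ hplus).trans (Set.image_mono TwoSidedIdeal.subset_span)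

theorem IsSympDet.of_comp (h : IsSympDet s d (D.comp π.toLinearMap) (P.comp (mapPlus hπ)))
    (hsurj : Function.Surjective π) (hplus : Function.Surjective (mapPlus hπ)) :
    IsSympDet s' d D P := by
  refine ⟨h.1.of_comp hπ hsurj hplus, fun y hy ↦ ?_⟩
  obtain ⟨x, hx, rfl⟩ := exists_mem_of_mem_twoSidedIdeal_map hsurj (chIdeal_le_map hπ hplus hy)
  exact PolyLaw.map_mem_lawKer (φ := π.toLinearMap) hsurj (h.2 x hx)

end Descent

end SympDet

open SympDet in
theorem stmt_4 {A : Type u} [CommRing A] {R : Type u} [Ring R] [Algebra A R]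
    (h2 : IsUnit (2 : A)) (s : InvAlg A R) (d : ℕ) (D : PolyLaw A R) (P : PolyLaw A ↥s.plus)
    (h : IsWeakSympDet s d D P) :
    (∀ x ∈ D.lawKer, s.star x ∈ D.lawKer) ∧
    (∀ (x : R) (hx : x ∈ s.plus), x ∈ D.lawKer → (⟨x, hx⟩ : ↥s.plus) ∈ P.lawKer) ∧
    (∀ (I : TwoSidedIdeal R), (∀ x ∈ I, x ∈ D.lawKer) → (∀ x ∈ I, s.star x ∈ I) →
      ∀ (R' : Type u) [Ring R'] [Algebra A R'] (s' : InvAlg A R') (π : R →ₐ[A] R'),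
        Function.Surjective π → (∀ x, π (s.star x) = s'.star (π x)) →
        (∀ x : R, π x = 0 ↔ x ∈ I) →
        ∃! q : PolyLaw A R' × PolyLaw A ↥s'.plus,
          IsWeakSympDet s' d q.1 q.2 ∧
          (∀ (B : Type u) [CommRing B] [Algebra A B] (x : B ⊗[A] R),
            D.toFun B x = q.1.toFun B (LinearMap.lTensor B π.toLinearMap x)) ∧
          (∀ (πp : ↥s.plus →ₗ[A] ↥s'.plus), (∀ y : ↥s.plus, ((πp y : R') = π (y : R))) →
            ∀ (B : Type u) [CommRing B] [Algebra A B] (y : B ⊗[A] ↥s.plus),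
              P.toFun B y = q.2.toFun B (LinearMap.lTensor B πp y)) ∧
          (IsSympDet s d D P → IsSympDet s' d q.1 q.2)) := by
  refine ⟨fun _ ↦ h.star_mem_lawKer, fun _ _ hx ↦ h.mem_lawKer_of_coe_mem h2 hx, ?_⟩
  intro I hI _ R' _ _ s' π hsurj hπ hker
  have ker_subset : (LinearMap.ker π.toLinearMap : Set R) ⊆ D.lawKer :=
    fun x hx ↦ hI x ((hker x).1 hx)
  have ker_plus_subset : (LinearMap.ker (InvAlg.mapPlus hπ) : Set s.plus) ⊆ P.lawKer :=
    fun _ hx ↦ h.mem_lawKer_of_coe_mem h2 (ker_subset (congrArg Subtype.val hx))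
  have hplus := InvAlg.mapPlus_surjective hπ h2 hsurj
  obtain ⟨D', rfl⟩ := D.exists_comp_eq hsurj ker_subset
  obtain ⟨P', rfl⟩ := P.exists_comp_eq hplus ker_plus_subset
  refine ⟨(D', P'), ⟨h.of_comp hπ hsurj hplus, fun _ _ _ _ ↦ rfl, fun πp hπp ↦ ?_,
    fun hCH ↦ hCH.of_comp hπ hsurj hplus⟩, ?_⟩
  · obtain rfl : πp = InvAlg.mapPlus hπ := LinearMap.ext fun y ↦ Subtype.ext (hπp y)
    exact fun _ _ _ _ ↦ rfl
  · rintro ⟨D'', P''⟩ ⟨-, hD, hP, -⟩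
    have D_eq : D''.comp π.toLinearMap = D'.comp π.toLinearMap :=
      PolyLaw.ext fun B _ _ x ↦ (hD B x).symm
    have P_eq : P''.comp (InvAlg.mapPlus hπ) = P'.comp (InvAlg.mapPlus hπ) :=
      PolyLaw.ext fun B _ _ x ↦ (hP (InvAlg.mapPlus hπ) (fun _ ↦ rfl) B x).symm
    exact Prod.ext (PolyLaw.comp_injective hsurj D_eq) (PolyLaw.comp_injective hplus P_eq)
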